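/- For any doubly stochastic n×n matrix A = (a_ij), the permanent of A is at least ∏_{i,j} (1-a_ij)^{1-a_ij}. -/

import Mathlib

open scoped BigOperators

noncomputable def perm {n : ℕ} (A : Matrix (Fin n) (Fin n) ℝ) : ℝ :=
  ∑ σ : Equiv.Perm (Fin n), ∏ i, A i (σ i)

/-!
Let `Z` be the monomer-dimer partition function of a complete bipartite graph with dimer weights
`w` and with monomer weights `r` on rows and `c` on columns. With `w = 0`,
`r i = ∑ j, a i j * y i j` and `c j = ∑ i, a i j * z i j`, weighted AM-GM gives
`∏ (y i j * z i j) ^ a i j ≤ Z`. With `w = a` and no monomers, `Z` is the permanent. We pass from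
the first situation to the second by turning the edges, one at a time, from contributions to the
monomer weights into dimers.

Suppose that the edge `(i, j)` is still to be turned, put `α = a i j`, and write `Zᵢ`, `Zⱼ` and
`Zᵢⱼ` for the partition functions with the indicated vertices removed. Raising `y i j` by `s` and
`z i j` by `t` in the inequality for the edges turned so far gives
`K * (s * t) ^ α ≤ Z + α * s * Zᵢ + α * t * Zⱼ + α ^ 2 * s * t * Zᵢⱼ` for all `s, t > 0`, where `K`
collects the factors of the other edges. A good choice of `s` and `t` yields
`K * (1 - α) ^ (1 - α) ≤ Z + α * Zᵢⱼ`, whose right side is the partition function with `(i, j)` as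
a dimer. This choice needs the correlation inequality `Zᵢ * Zⱼ ≤ Z * Zᵢⱼ`, which is proved by
induction on the columns together with its reversed analogue for two vertices on the same side.
-/

open Finset

section MonomerDimer

variable {I J R : Type*} [DecidableEq I] [DecidableEq J]

/-- The matchings, as sets of edges, of the complete bipartite graph with parts `S` and `T`. -/
def matchings (S : Finset I) (T : Finset J) : Finset (Finset (I × J)) :=
  {M ∈ (S ×ˢ T).powerset | Set.InjOn Prod.fst (M : Set (I × J)) ∧
    Set.InjOn Prod.snd (M : Set (I × J))}

/-- The monomer-dimer partition function of the complete bipartite graph with parts `S` and `T`: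
the edges of a matching are the dimers, weighted by `w`, and the vertices it leaves uncovered are
the monomers, weighted by `r` and `c`. -/
def monomerDimer [CommSemiring R] (w : I × J → R) (r : I → R) (c : J → R)
    (S : Finset I) (T : Finset J) : R :=
  ∑ M ∈ matchings S T, (∏ e ∈ M, w e) * (∏ i ∈ S \ M.image Prod.fst, r i) *
    ∏ j ∈ T \ M.image Prod.snd, c j

section Matchings

variable {S : Finset I} {T : Finset J} {M : Finset (I × J)} {i : I} {j : J}

lemma mem_matchings : M ∈ matchings S T ↔ (∀ i j, (i, j) ∈ M → i ∈ S ∧ j ∈ T) ∧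
    (∀ i j j', (i, j) ∈ M → (i, j') ∈ M → j = j') ∧
    ∀ i i' j, (i, j) ∈ M → (i', j) ∈ M → i = i' := by
  rw [matchings, mem_filter, mem_powerset, Finset.subset_iff]
  simp only [Set.InjOn, Prod.forall, mem_coe, mem_product, Prod.mk.injEq]
  grind

lemma insert_mem_matchings (hi : i ∈ S) (hj : j ∈ T)
    (hM : M ∈ matchings (S.erase i) (T.erase j)) : insert (i, j) M ∈ matchings S T := by
  simp only [mem_matchings, mem_insert, mem_erase] at hM ⊢
  grind

lemma erase_mem_matchings (hM : M ∈ matchings S T) (he : (i, j) ∈ M) :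
    M.erase (i, j) ∈ matchings (S.erase i) (T.erase j) := by
  simp only [mem_matchings, mem_erase] at hM ⊢
  grind

lemma filter_notMem_image_fst_matchings :
    {M ∈ matchings S T | i ∉ M.image Prod.fst} = matchings (S.erase i) T := by
  ext M
  simp only [mem_filter, mem_matchings, mem_image, mem_erase, Prod.exists, exists_and_right]
  grind

lemma sum_matchings_filter_mem [AddCommMonoid R] (hi : i ∈ S) (hj : j ∈ T)
    (f : Finset (I × J) → R) :
    ∑ M ∈ matchings S T with (i, j) ∈ M, f M =
      ∑ M ∈ matchings (S.erase i) (T.erase j), f (insert (i, j) M) := by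
  refine sum_nbij' (·.erase (i, j)) (insert (i, j)) (fun M hM ↦ ?_) (fun M hM ↦ ?_)
    (fun M hM ↦ ?_) (fun M hM ↦ ?_) (fun M hM ↦ ?_)
  · exact erase_mem_matchings (mem_filter.1 hM).1 (mem_filter.1 hM).2
  · exact mem_filter.2 ⟨insert_mem_matchings hi hj hM, mem_insert_self _ _⟩
  · exact insert_erase (mem_filter.1 hM).2
  · refine erase_insert fun he ↦ ?_
    exact notMem_erase i S ((mem_matchings.1 hM).1 i j he).1
  · rw [insert_erase (mem_filter.1 hM).2]

lemma sum_matchings_eq_add_sum [AddCommMonoid R] (hi : i ∈ S) (f : Finset (I × J) → R) :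
    ∑ M ∈ matchings S T, f M = ∑ M ∈ matchings (S.erase i) T, f M +
      ∑ j ∈ T, ∑ M ∈ matchings (S.erase i) (T.erase j), f (insert (i, j) M) := by
  have partner : ∀ M ∈ matchings S T,
      (if i ∈ M.image Prod.fst then f M else 0) = ∑ j ∈ T, if (i, j) ∈ M then f M else 0 := by
    intro M hM
    rw [mem_matchings] at hM
    by_cases hiM : i ∈ M.image Prod.fst
    · obtain ⟨⟨_, j⟩, he, rfl⟩ := mem_image.1 hiM
      rw [if_pos hiM, sum_eq_single_of_mem j (hM.1 _ _ he).2 (by grind), if_pos he]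
    · rw [if_neg hiM, sum_eq_zero (by grind)]
  rw [← sum_filter_not_add_sum_filter (matchings S T) (fun M ↦ i ∈ M.image Prod.fst) f,
    filter_notMem_image_fst_matchings, sum_filter, sum_congr rfl partner, sum_comm]
  congr 1
  exact sum_congr rfl fun j hj ↦ by rw [← sum_filter, sum_matchings_filter_mem hi hj]

lemma image_swap_mem_matchings (hM : M ∈ matchings S T) : M.image Prod.swap ∈ matchings T S := by
  simp only [mem_matchings, mem_image, Prod.exists, Prod.swap_prod_mk, Prod.mk.injEq] at hM ⊢
  grind

end Matchings

section CommSemiring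

variable [CommSemiring R] (w : I × J → R) (r : I → R) (c : J → R) {S : Finset I} {T : Finset J}
  {i : I} {j : J}

lemma monomerDimer_swap :
    monomerDimer (w ∘ Prod.swap) c r T S = monomerDimer w r c S T := by
  refine sum_nbij' (·.image Prod.swap) (·.image Prod.swap) (fun _ ↦ image_swap_mem_matchings)
    (fun _ ↦ image_swap_mem_matchings) (fun M _ ↦ ?_) (fun M _ ↦ ?_) (fun M _ ↦ ?_)
  · simp [image_image]
  · simp [image_image]
  · rw [prod_image Prod.swap_injective.injOn, image_image, image_image]
    simp only [Function.comp_def, Prod.fst_swap, Prod.snd_swap]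
    ring

lemma monomerDimer_congr {w w' : I × J → R} {r r' : I → R} {c c' : J → R}
    (hw : ∀ i ∈ S, ∀ j ∈ T, w (i, j) = w' (i, j)) (hr : ∀ i ∈ S, r i = r' i)
    (hc : ∀ j ∈ T, c j = c' j) : monomerDimer w r c S T = monomerDimer w' r' c' S T := by
  refine sum_congr rfl fun M hM ↦ ?_
  have hMST := (mem_matchings.1 hM).1
  congr 1
  · congr 1
    · exact prod_congr rfl fun e he ↦ hw e.1 (hMST _ _ he).1 e.2 (hMST _ _ he).2
    · exact prod_congr rfl fun i hi ↦ hr i (mem_sdiff.1 hi).1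
  · exact prod_congr rfl fun j hj ↦ hc j (mem_sdiff.1 hj).1

lemma monomerDimer_expand_row (hi : i ∈ S) :
    monomerDimer w r c S T = r i * monomerDimer w r c (S.erase i) T +
      ∑ j ∈ T, w (i, j) * monomerDimer w r c (S.erase i) (T.erase j) := by
  simp only [monomerDimer]
  rw [sum_matchings_eq_add_sum hi]
  simp only [mul_sum]
  congr 1
  · refine sum_congr rfl fun M hM ↦ ?_
    have hiM : i ∈ S \ M.image Prod.fst := by
      rw [← filter_notMem_image_fst_matchings, mem_filter] at hM
      exact mem_sdiff.2 ⟨hi, hM.2⟩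
    rw [← mul_prod_erase _ _ hiM, ← erase_sdiff_comm]
    ring
  · refine sum_congr rfl fun j _ ↦ sum_congr rfl fun M hM ↦ ?_
    have he : (i, j) ∉ M := fun he ↦ notMem_erase i S ((mem_matchings.1 hM).1 i j he).1
    rw [prod_insert he, image_insert, image_insert, sdiff_insert, sdiff_insert,
      erase_sdiff_comm, erase_sdiff_comm]
    ring

lemma monomerDimer_expand_col (hj : j ∈ T) :
    monomerDimer w r c S T = c j * monomerDimer w r c S (T.erase j) +
      ∑ i ∈ S, w (i, j) * monomerDimer w r c (S.erase i) (T.erase j) := by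
  simpa only [monomerDimer_swap, Function.comp_apply, Prod.swap_prod_mk] using
    monomerDimer_expand_row (T := S) (w ∘ Prod.swap) c r hj

lemma monomerDimer_add_single_row (x : R) (hi : i ∈ S) :
    monomerDimer w (r + Pi.single i x) c S T =
      monomerDimer w r c S T + x * monomerDimer w r c (S.erase i) T := by
  have off_row (T' : Finset J) : monomerDimer w (r + Pi.single i x) c (S.erase i) T' =
      monomerDimer w r c (S.erase i) T' :=
    monomerDimer_congr (fun _ _ _ _ ↦ rfl) (fun k hk ↦ by simp [ne_of_mem_erase hk])
      fun _ _ ↦ rfl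
  rw [monomerDimer_expand_row _ _ _ hi, monomerDimer_expand_row _ r _ hi]
  simp only [off_row, Pi.add_apply, Pi.single_eq_same]
  ring

lemma monomerDimer_add_single_col (x : R) (hj : j ∈ T) :
    monomerDimer w r (c + Pi.single j x) S T =
      monomerDimer w r c S T + x * monomerDimer w r c S (T.erase j) := by
  simpa only [monomerDimer_swap] using
    monomerDimer_add_single_row (T := S) (w ∘ Prod.swap) c r x hj

lemma monomerDimer_add_single_edge (x : R) (hi : i ∈ S) (hj : j ∈ T) :
    monomerDimer (w + Pi.single (i, j) x) r c S T =
      monomerDimer w r c S T + x * monomerDimer w r c (S.erase i) (T.erase j) := by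
  have off_row (T' : Finset J) :
      monomerDimer (w + Pi.single (i, j) x) r c (S.erase i) T' =
        monomerDimer w r c (S.erase i) T' :=
    monomerDimer_congr (fun k hk l _ ↦ by simp [ne_of_mem_erase hk]) (fun _ _ ↦ rfl)
      fun _ _ ↦ rfl
  rw [monomerDimer_expand_row _ _ _ hi, monomerDimer_expand_row w _ _ hi]
  simp only [off_row, Pi.add_apply, add_mul, sum_add_distrib]
  have only_j : ∑ k ∈ T, (Pi.single (i, j) x : I × J → R) (i, k) *
      monomerDimer w r c (S.erase i) (T.erase k) =
        x * monomerDimer w r c (S.erase i) (T.erase j) := by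
    rw [sum_eq_single_of_mem j hj fun k _ hk ↦ by simp [hk], Pi.single_eq_same]
  rw [only_j, add_assoc]

lemma monomerDimer_zero_edges :
    monomerDimer 0 r c S T = (∏ i ∈ S, r i) * ∏ j ∈ T, c j := by
  rw [monomerDimer, sum_eq_single_of_mem ∅ (by simp [mem_matchings])]
  · simp
  · intro M _ hM
    obtain ⟨e, he⟩ := nonempty_iff_ne_empty.2 hM
    simp [prod_eq_zero he]

end CommSemiring

section PerfectMatchings

variable [Fintype I] [Fintype J]

lemma exists_equiv_of_mem_matchings {M : Finset (I × J)} (hM : M ∈ matchings univ univ)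
    (hrow : ∀ i, ∃ j, (i, j) ∈ M) (hcol : ∀ j, ∃ i, (i, j) ∈ M) :
    ∃ σ : I ≃ J, univ.image (fun i ↦ (i, σ i)) = M := by
  obtain ⟨-, row_unique, col_unique⟩ := mem_matchings.1 hM
  choose σ hσ using hrow
  choose τ hτ using hcol
  refine ⟨⟨σ, τ, fun i ↦ col_unique _ _ _ (hτ _) (hσ i), fun j ↦ row_unique _ _ _ (hσ _) (hτ j)⟩,
    ?_⟩
  ext ⟨i, j⟩
  simp only [Equiv.coe_fn_mk, mem_image, mem_univ, true_and, Prod.mk.injEq]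
  grind

lemma image_graph_mem_matchings (σ : I ≃ J) :
    univ.image (fun i ↦ (i, σ i)) ∈ matchings univ univ := by
  simp only [mem_matchings, mem_univ, mem_image, true_and, Prod.mk.injEq]
  grind [σ.injective.eq_iff]

omit [Fintype J] in
lemma image_graph_injective :
    Function.Injective fun σ : I ≃ J ↦ univ.image fun i ↦ (i, σ i) := by
  intro σ τ h
  ext i
  have hi : (i, σ i) ∈ univ.image fun i ↦ (i, τ i) := by
    rw [← show univ.image (fun i ↦ (i, σ i)) = univ.image fun i ↦ (i, τ i) from h]
    simp
  simpa [eq_comm] using hi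

lemma monomerDimer_zero_monomers [CommSemiring R] (w : I × J → R) :
    monomerDimer w 0 0 univ univ = ∑ σ : I ≃ J, ∏ i, w (i, σ i) := by
  refine (sum_of_injOn _ image_graph_injective.injOn
    (fun σ _ ↦ image_graph_mem_matchings σ) ?_ ?_).symm
  · intro M hM not_graph
    by_contra weight_ne_zero
    have hrow : ∀ i, ∃ j, (i, j) ∈ M := by
      intro i
      contrapose! weight_ne_zero
      rw [prod_eq_zero (i := i) (s := univ \ _) (by simpa) rfl, mul_zero, zero_mul]
    have hcol : ∀ j, ∃ i, (i, j) ∈ M := by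
      intro j
      contrapose! weight_ne_zero
      rw [prod_eq_zero (i := j) (s := univ \ M.image Prod.snd) (by simpa) rfl, mul_zero]
    obtain ⟨σ, hσ⟩ := exists_equiv_of_mem_matchings hM hrow hcol
    exact not_graph ⟨σ, by simp, hσ⟩
  · intro σ _
    have hfst : (univ.image fun i ↦ (i, σ i)).image Prod.fst = univ := by
      rw [image_image]; exact image_id
    have hsnd : (univ.image fun i ↦ (i, σ i)).image Prod.snd = univ := by
      rw [image_image]; exact image_univ_of_surjective σ.surjective
    rw [hfst, hsnd, prod_image (fun _ _ _ _ h ↦ congrArg Prod.fst h)]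
    simp

end PerfectMatchings

section Correlation

variable [CommRing R] [LinearOrder R] [IsStrictOrderedRing R] {w : I × J → R} {r : I → R}
  {c : J → R}

lemma monomerDimer_nonneg (hw : 0 ≤ w) (hr : 0 ≤ r) (hc : 0 ≤ c) (S : Finset I)
    (T : Finset J) : 0 ≤ monomerDimer w r c S T :=
  sum_nonneg fun _ _ ↦ mul_nonneg (mul_nonneg (prod_nonneg fun e _ ↦ hw e)
    (prod_nonneg fun i _ ↦ hr i)) (prod_nonneg fun j _ ↦ hc j)

lemma monomerDimer_mul_le_same_side {S : Finset I} {T : Finset J} {j k : J} (hw : 0 ≤ w)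
    (hj : j ∈ T) (hjk : j ≠ k)
    (opposite_sides : ∀ l ∈ S,
      monomerDimer w r c (S.erase l) (T.erase j) * monomerDimer w r c S ((T.erase j).erase k) ≤
        monomerDimer w r c S (T.erase j) *
          monomerDimer w r c (S.erase l) ((T.erase j).erase k)) :
    monomerDimer w r c S T * monomerDimer w r c S ((T.erase j).erase k) ≤
      monomerDimer w r c S (T.erase j) * monomerDimer w r c S (T.erase k) := by
  rw [monomerDimer_expand_col w r c hj,
    monomerDimer_expand_col w r c (T := T.erase k) (mem_erase.2 ⟨hjk, hj⟩),
    erase_right_comm (a := k), add_mul, mul_add, sum_mul, mul_sum]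
  refine add_le_add (le_of_eq (by ring)) (sum_le_sum fun l hl ↦ ?_)
  linarith [mul_le_mul_of_nonneg_left (opposite_sides l hl) (hw (l, j))]

theorem monomerDimer_mul_le_opposite_sides (hw : 0 ≤ w) {S : Finset I} {T : Finset J} {i : I}
    {j : J} (hi : i ∈ S) (hj : j ∈ T) :
    monomerDimer w r c (S.erase i) T * monomerDimer w r c S (T.erase j) ≤
      monomerDimer w r c S T * monomerDimer w r c (S.erase i) (T.erase j) := by
  induction T using Finset.strongInduction generalizing S i j with
  | H T ih =>
    have same_side : ∀ k ∈ T.erase j,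
        monomerDimer w r c (S.erase i) T * monomerDimer w r c (S.erase i) ((T.erase j).erase k) ≤
          monomerDimer w r c (S.erase i) (T.erase j) *
            monomerDimer w r c (S.erase i) (T.erase k) := fun k hk ↦
      monomerDimer_mul_le_same_side hw hj (ne_of_mem_erase hk).symm
        fun l hl ↦ ih _ (erase_ssubset hj) hl hk
    have sum_same_side := sum_le_sum fun k hk ↦
      mul_le_mul_of_nonneg_left (same_side k hk) (hw (i, k))
    have edge_term_nonneg : 0 ≤ w (i, j) * (monomerDimer w r c (S.erase i) (T.erase j)) ^ 2 :=
      mul_nonneg (hw _) (sq_nonneg _)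
    simp only [mul_left_comm (w _), ← mul_sum] at sum_same_side
    rw [monomerDimer_expand_row w r c (T := T) hi,
      monomerDimer_expand_row w r c (T := T.erase j) hi, ← add_sum_erase T _ hj]
    linarith

end Correlation
end MonomerDimer

section EdgeInequality

variable {a B C D K α β : ℝ}

/- The substitution `a = x * D * β ^ 2` is chosen so that `s * t = x` at `s = x * D * β / B`,
`t = B / (D * β)`, the optimum for `β = 1 - α` when `B * C = a * D`. A free `β ≥ 1 - α` keeps these
divisions meaningful when `α = 1`. -/
lemma mul_rpow_one_sub_le_of_pos (hα₀ : 0 ≤ α) (hα₁ : α ≤ 1) (ha : 0 < a) (hB : 0 < B)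
    (hD : 0 < D) (hBC : B * C ≤ a * D) (hβ : 0 < β) (hαβ : 1 - α ≤ β)
    (h : ∀ s t : ℝ, 0 < s → 0 < t →
      K * (s * t) ^ α ≤ a + α * B * s + α * C * t + α ^ 2 * D * (s * t)) :
    K * β ^ (1 - α) ≤ (a + α * D) * (α + β) ^ 2 := by
  obtain ⟨x, hx, rfl⟩ : ∃ x, 0 < x ∧ x * (D * β ^ 2) = a :=
    ⟨a / (D * β ^ 2), by positivity, by field_simp⟩
  have at_optimum : K * x ^ α ≤ x * D * (α + β) ^ 2 := by
    have hC : C / D ≤ x * D * β ^ 2 / B := by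
      rw [div_le_div_iff₀ hD hB]
      linarith
    have := h (x * D * β / B) (B / (D * β)) (by positivity) (by positivity)
    rw [show x * D * β / B * (B / (D * β)) = x by field_simp] at this
    calc K * x ^ α ≤ _ := this
      _ = x * D * β ^ 2 + α * x * D * β + α / β * (B * (C / D)) + α ^ 2 * D * x := by
        field_simp
      _ ≤ x * D * β ^ 2 + α * x * D * β + α / β * (B * (x * D * β ^ 2 / B)) + α ^ 2 * D * x := by
        gcongr
      _ = x * D * (α + β) ^ 2 := by field_simp; ring
  have geom_le : x ^ (1 - α) * D * β ^ (1 - α) ≤ x * (D * β ^ 2) + α * D := by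
    have hDα : D ^ (1 - α) * D ^ α = D := by
      rw [← Real.rpow_add hD, sub_add_cancel, Real.rpow_one]
    calc x ^ (1 - α) * D * β ^ (1 - α) = (x * D * β) ^ (1 - α) * D ^ α := by
          rw [Real.mul_rpow (by positivity) hβ.le, Real.mul_rpow hx.le hD.le]
          linear_combination -x ^ (1 - α) * β ^ (1 - α) * hDα
      _ ≤ (1 - α) * (x * D * β) + α * D :=
        Real.geom_mean_le_arith_mean2_weighted (by linarith) hα₀ (by positivity) hD.le (by ring)
      _ ≤ β * (x * D * β) + α * D := by gcongr
      _ = x * (D * β ^ 2) + α * D := by ring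
  have hxα : x ^ α * x ^ (1 - α) = x := by
    rw [← Real.rpow_add hx, add_sub_cancel, Real.rpow_one]
  refine le_of_mul_le_mul_left ?_ (Real.rpow_pos_of_pos hx α)
  calc x ^ α * (K * β ^ (1 - α)) = K * x ^ α * β ^ (1 - α) := by ring
    _ ≤ x * D * (α + β) ^ 2 * β ^ (1 - α) := by gcongr
    _ = x ^ α * (x ^ (1 - α) * D * β ^ (1 - α) * (α + β) ^ 2) := by
      nth_rw 1 [← hxα]
      ring
    _ ≤ x ^ α * ((x * (D * β ^ 2) + α * D) * (α + β) ^ 2) := by gcongr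

lemma mul_one_sub_rpow_one_sub_le (hα₀ : 0 ≤ α) (hα₁ : α ≤ 1) (ha : 0 ≤ a) (hB : 0 ≤ B)
    (hC : 0 ≤ C) (hD : 0 ≤ D) (hBC : B * C ≤ a * D)
    (h : ∀ s t : ℝ, 0 < s → 0 < t →
      K * (s * t) ^ α ≤ a + α * B * s + α * C * t + α ^ 2 * D * (s * t)) :
    K * (1 - α) ^ (1 - α) ≤ a + α * D := by
  have perturbed : ∀ ε : ℝ, 0 < ε →
      K * (1 - α + ε) ^ (1 - α) ≤ (a + ε + α * (D + ε)) * (α + (1 - α + ε)) ^ 2 := by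
    intro ε hε
    have hBC' : (B + ε ^ 2 / (C + 1)) * C ≤ (a + ε) * (D + ε) := by
      have : ε ^ 2 / (C + 1) * C ≤ ε ^ 2 := by
        rw [div_mul_eq_mul_div, div_le_iff₀ (by positivity)]
        nlinarith
      nlinarith
    refine mul_rpow_one_sub_le_of_pos hα₀ hα₁ (by positivity) (by positivity) (by positivity) hBC'
      (by linarith) (by linarith) fun s t hs ht ↦ (h s t hs ht).trans ?_
    gcongr <;> simp only [le_add_iff_nonneg_right] <;> positivity
  have lim_left : Continuous fun ε : ℝ ↦ K * (1 - α + ε) ^ (1 - α) :=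
    continuous_const.mul ((continuous_const.add continuous_id).rpow_const
      fun _ ↦ Or.inr (sub_nonneg.2 hα₁))
  have lim_right : Continuous fun ε : ℝ ↦
      (a + ε + α * (D + ε)) * (α + (1 - α + ε)) ^ 2 := by fun_prop
  simpa using ContinuousWithinAt.closure_le (s := Set.Ioi 0) (x := 0) (by simp)
    lim_left.continuousWithinAt lim_right.continuousWithinAt perturbed

end EdgeInequality

section PermanentBound

variable {I J : Type*}

/-- The row sums of the matrix `(f (i, j))`. -/
def rowSums [Fintype J] (f : I × J → ℝ) (i : I) : ℝ := ∑ j, f (i, j)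

/-- The column sums of the matrix `(f (i, j))`. -/
def colSums [Fintype I] (f : I × J → ℝ) (j : J) : ℝ := ∑ i, f (i, j)

variable [Fintype I] [Fintype J] {a y z : I × J → ℝ}

lemma prod_rpow_le_prod_rowSums (ha : 0 ≤ a) (hrow : ∀ i, rowSums a i = 1) (hy : 0 ≤ y) :
    ∏ e, y e ^ a e ≤ ∏ i, rowSums (a * y) i := by
  rw [Fintype.prod_prod_type]
  exact prod_le_prod (fun i _ ↦ prod_nonneg fun j _ ↦ Real.rpow_nonneg (hy _) _) fun i _ ↦
    Real.geom_mean_le_arith_mean_weighted _ _ _ (fun j _ ↦ ha (i, j)) (hrow i)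
      fun j _ ↦ hy (i, j)

lemma prod_rpow_le_prod_colSums (ha : 0 ≤ a) (hcol : ∀ j, colSums a j = 1) (hz : 0 ≤ z) :
    ∏ e, z e ^ a e ≤ ∏ j, colSums (a * z) j := by
  rw [← (Equiv.prodComm J I).prod_comp]
  exact prod_rpow_le_prod_rowSums (a := a ∘ Prod.swap) (y := z ∘ Prod.swap)
    (fun e ↦ ha e.swap) hcol fun e ↦ hz e.swap

lemma prod_mul_rpow_le_prod_rowSums_mul_prod_colSums (ha : 0 ≤ a) (hrow : ∀ i, rowSums a i = 1)
    (hcol : ∀ j, colSums a j = 1) (hy : 0 ≤ y) (hz : 0 ≤ z) :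
    ∏ e, (y e * z e) ^ a e ≤ (∏ i, rowSums (a * y) i) * ∏ j, colSums (a * z) j := by
  rw [prod_congr rfl fun e _ ↦ Real.mul_rpow (hy e) (hz e), prod_mul_distrib]
  have geom_nonneg {x : I × J → ℝ} (hx : 0 ≤ x) : 0 ≤ ∏ e, x e ^ a e :=
    prod_nonneg fun e _ ↦ Real.rpow_nonneg (hx e) _
  have row_bound := prod_rpow_le_prod_rowSums ha hrow hy
  exact mul_le_mul row_bound (prod_rpow_le_prod_colSums ha hcol hz) (geom_nonneg hz)
    ((geom_nonneg hy).trans row_bound)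

variable [DecidableEq I] [DecidableEq J]

omit [Fintype I] in
lemma rowSums_mul_add_single (i : I) (j : J) (s : ℝ) :
    rowSums (a * (y + Pi.single (i, j) s)) = rowSums (a * y) + Pi.single i (a (i, j) * s) := by
  ext k
  simp only [rowSums, Pi.mul_apply, Pi.add_apply, mul_add, sum_add_distrib]
  obtain rfl | hk := eq_or_ne k i
  · have only_j : ∑ l, a (k, l) * (Pi.single (k, j) s : I × J → ℝ) (k, l) = a (k, j) * s := by
      rw [sum_eq_single_of_mem j (mem_univ j) fun l _ hl ↦ by simp [hl], Pi.single_eq_same]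
    rw [only_j, Pi.single_eq_same]
  · simp [hk]

omit [Fintype J] in
lemma colSums_mul_add_single (i : I) (j : J) (s : ℝ) :
    colSums (a * (z + Pi.single (i, j) s)) = colSums (a * z) + Pi.single j (a (i, j) * s) := by
  ext k
  simp only [colSums, Pi.mul_apply, Pi.add_apply, mul_add, sum_add_distrib]
  obtain rfl | hk := eq_or_ne k j
  · have only_i : ∑ l, a (l, k) * (Pi.single (i, k) s : I × J → ℝ) (l, k) = a (i, k) * s := by
      rw [sum_eq_single_of_mem i (mem_univ i) fun l _ hl ↦ by simp [hl], Pi.single_eq_same]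
    rw [only_i, Pi.single_eq_same]
  · simp [hk]

omit [Fintype I] [Fintype J] in
lemma mul_rpow_le_prod_add_single (ha : 0 ≤ a) (hy : 0 ≤ y) (hz : 0 ≤ z) {F : Finset (I × J)}
    {e : I × J} (he : e ∈ F) {s t : ℝ} (hs : 0 ≤ s) (ht : 0 ≤ t) :
    (∏ f ∈ F.erase e, (y f * z f) ^ a f) * (s * t) ^ a e ≤
      ∏ f ∈ F, ((y + Pi.single e s : I × J → ℝ) f * (z + Pi.single e t : I × J → ℝ) f) ^ a f := by
  rw [← prod_erase_mul F _ he]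
  have off_e : ∀ f ∈ F.erase e, (y f * z f) ^ a f =
      ((y + Pi.single e s : I × J → ℝ) f * (z + Pi.single e t : I × J → ℝ) f) ^ a f := by
    intro f hf
    simp [ne_of_mem_erase hf]
  rw [← prod_congr rfl off_e]
  have hs' : s ≤ (y + Pi.single e s : I × J → ℝ) e := by simpa using hy e
  have ht' : t ≤ (z + Pi.single e t : I × J → ℝ) e := by simpa using hz e
  exact mul_le_mul_of_nonneg_left
    (Real.rpow_le_rpow (mul_nonneg hs ht) (mul_le_mul hs' ht' ht (hs.trans hs')) (ha e))
    (prod_nonneg fun f _ ↦ Real.rpow_nonneg (mul_nonneg (hy f) (hz f)) _)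

theorem prod_mul_prod_rpow_le_monomerDimer (ha : 0 ≤ a) (hrow : ∀ i, rowSums a i = 1)
    (hcol : ∀ j, colSums a j = 1) (hy : 0 ≤ y) (hz : 0 ≤ z) (E : Finset (I × J)) :
    (∏ e ∈ E, (1 - a e) ^ (1 - a e)) * ∏ e ∈ Eᶜ, (y e * z e) ^ a e ≤
      monomerDimer (∑ e ∈ E, Pi.single e (a e)) (rowSums (a * y)) (colSums (a * z))
        univ univ := by
  induction E using Finset.induction generalizing y z with
  | empty =>
    rw [prod_empty, one_mul, compl_empty, sum_empty, monomerDimer_zero_edges]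
    exact prod_mul_rpow_le_prod_rowSums_mul_prod_colSums ha hrow hcol hy hz
  | insert e E he ih =>
    obtain ⟨i, j⟩ := e
    have ha₁ (e : I × J) : a e ≤ 1 :=
      hrow e.1 ▸ single_le_sum (f := fun j ↦ a (e.1, j)) (fun k _ ↦ ha (e.1, k)) (mem_univ e.2)
    have inserted_nonneg : 0 ≤ ∏ e ∈ E, (1 - a e) ^ (1 - a e) :=
      prod_nonneg fun e _ ↦ Real.rpow_nonneg (sub_nonneg.2 (ha₁ e)) _
    have hw : 0 ≤ ∑ e ∈ E, (Pi.single e (a e) : I × J → ℝ) :=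
      sum_nonneg fun e _ ↦ Pi.single_nonneg.2 (ha e)
    have hr : 0 ≤ rowSums (a * y) := fun i ↦ sum_nonneg fun j _ ↦ mul_nonneg (ha _) (hy _)
    have hc : 0 ≤ colSums (a * z) := fun j ↦ sum_nonneg fun i _ ↦ mul_nonneg (ha _) (hz _)
    have hZ := monomerDimer_nonneg hw hr hc
    rw [sum_insert he, add_comm, prod_insert he, compl_insert,
      monomerDimer_add_single_edge _ _ _ _ (mem_univ i) (mem_univ j), mul_assoc, mul_comm]
    refine mul_one_sub_rpow_one_sub_le (ha _) (ha₁ _) (hZ _ _) (hZ _ _) (hZ _ _) (hZ _ _)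
      (monomerDimer_mul_le_opposite_sides hw (mem_univ i) (mem_univ j)) fun s t hs ht ↦ ?_
    have hy' : 0 ≤ y + Pi.single (i, j) s := add_nonneg hy (Pi.single_nonneg.2 hs.le)
    have hz' : 0 ≤ z + Pi.single (i, j) t := add_nonneg hz (Pi.single_nonneg.2 ht.le)
    have insertion := mul_le_mul_of_nonneg_left
      (mul_rpow_le_prod_add_single ha hy hz (mem_compl.2 he) hs.le ht.le) inserted_nonneg
    rw [← mul_assoc] at insertion
    refine (insertion.trans (ih hy' hz')).trans_eq ?_
    rw [rowSums_mul_add_single, colSums_mul_add_single,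
      monomerDimer_add_single_row _ _ _ _ (mem_univ i),
      monomerDimer_add_single_col _ _ _ _ (mem_univ j),
      monomerDimer_add_single_col _ _ _ _ (mem_univ j)]
    ring

theorem prod_one_sub_rpow_le_sum_equiv (ha : 0 ≤ a) (hrow : ∀ i, rowSums a i = 1)
    (hcol : ∀ j, colSums a j = 1) :
    ∏ e, (1 - a e) ^ (1 - a e) ≤ ∑ σ : I ≃ J, ∏ i, a (i, σ i) := by
  have bound := prod_mul_prod_rpow_le_monomerDimer ha hrow hcol le_rfl le_rfl univ
  have row_zero : rowSums (a * 0) = 0 := by ext; simp [rowSums]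
  have col_zero : colSums (a * 0) = 0 := by ext; simp [colSums]
  rwa [row_zero, col_zero, univ_sum_single, monomerDimer_zero_monomers, compl_univ, prod_empty,
    mul_one] at bound

end PermanentBound

theorem stmt_0_general {ι : Type*} [Fintype ι] [DecidableEq ι] {A : Matrix ι ι ℝ}
    (hA : A ∈ doublyStochastic ℝ ι) :
    ∏ i, ∏ j, (1 - A i j) ^ (1 - A i j) ≤ A.permanent := by
  obtain ⟨hnn, hrow, hcol⟩ := mem_doublyStochastic_iff_sum.1 hA
  rw [← Matrix.permanent_transpose, ← Fintype.prod_prod_type']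
  exact prod_one_sub_rpow_le_sum_equiv (a := fun e ↦ A e.1 e.2) (fun e ↦ hnn e.1 e.2) hrow hcol

theorem stmt_0 {n : ℕ} (A : Matrix (Fin n) (Fin n) ℝ)
    (hnn : ∀ i j, 0 ≤ A i j)
    (hrow : ∀ i, ∑ j, A i j = 1)
    (hcol : ∀ j, ∑ i, A i j = 1) :
    perm A ≥ ∏ i, ∏ j, (1 - A i j) ^ (1 - A i j) :=
  (stmt_0_general (mem_doublyStochastic_iff_sum.2 ⟨hnn, hrow, hcol⟩)).trans_eq
    A.permanent_transpose.symm
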